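/- Let y : ℝ → ℝ be twice differentiable on an interval I ⊆ (0,∞) and satisfy Newton's differential equation y''(x) = y'(x)·((y'(x))² + 1) / (x·(3(y'(x))² − 1)) on I, where 3(y'(x))² ≠ 1 on I. Then the function x ↦ x·y'(x)/((y'(x))² + 1)² has derivative zero on I; in particular it is constant on I (a first integral of Newton's equation). -/

import Mathlib

/-!
The Lagrangian `Φ(x, y, ẏ) = 2x / (ẏ² + 1)` does not depend on `y`, so the Euler–Lagrange equation
says that the conjugate momentum `∂Φ/∂ẏ = -4xẏ / (ẏ² + 1)²` is constant along solutions. Its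
derivative along `ẏ = p` is, up to the factor `-4`, the residual `p (p² + 1) - p' x (3p² - 1)` of
Newton's equation divided by `(p² + 1)³`.
-/

/-- The momentum `∂Φ/∂q` conjugate to the drag Lagrangian `Φ(x, q) = 2x / (q² + 1)` at abscissa `x`
and slope `q`, without its constant factor `-4`. It is the first integral of Newton's equation. -/
def dragMomentum {𝕜 : Type*} [Field 𝕜] (x q : 𝕜) : 𝕜 :=
  x * q / (q ^ 2 + 1) ^ 2

section Derivative

variable {𝕜 : Type*} [NontriviallyNormedField 𝕜]

theorem hasDerivAt_div_sq_add_one_sq {q : 𝕜} (hq : q ^ 2 + 1 ≠ 0) :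
    HasDerivAt (fun r : 𝕜 => r / (r ^ 2 + 1) ^ 2) ((1 - 3 * q ^ 2) / (q ^ 2 + 1) ^ 3) q := by
  have hden : HasDerivAt (fun r : 𝕜 => (r ^ 2 + 1) ^ 2) (2 * (q ^ 2 + 1) * (2 * q)) q := by
    simpa using ((hasDerivAt_pow 2 q).add_const 1).fun_pow 2
  refine ((hasDerivAt_id' q).fun_div hden (pow_ne_zero 2 hq)).congr_deriv ?_
  field_simp
  ring

theorem hasDerivAt_dragMomentum {p : 𝕜 → 𝕜} {p' x : 𝕜} (hp : HasDerivAt p p' x)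
    (hpx : p x ^ 2 + 1 ≠ 0) :
    HasDerivAt (fun t => dragMomentum t (p t))
      ((p x * (p x ^ 2 + 1) - p' * (x * (3 * p x ^ 2 - 1))) / (p x ^ 2 + 1) ^ 3) x := by
  have hslope : HasDerivAt (fun t => p t / (p t ^ 2 + 1) ^ 2)
      ((1 - 3 * p x ^ 2) / (p x ^ 2 + 1) ^ 3 * p') x :=
    (hasDerivAt_div_sq_add_one_sq hpx).comp x hp
  simp only [dragMomentum, mul_div_assoc]
  refine ((hasDerivAt_id' x).fun_mul hslope).congr_deriv ?_
  field_simp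
  ring

end Derivative

theorem eq_of_hasDerivWithinAt_zero_of_convex {𝕜 E : Type*} [RCLike 𝕜] [NormedAddCommGroup E]
    [NormedSpace 𝕜 E] {f : 𝕜 → E} {s : Set 𝕜} (hs : Convex ℝ s)
    (hf : ∀ x ∈ s, HasDerivWithinAt f 0 s x) {x z : 𝕜} (hx : x ∈ s) (hz : z ∈ s) :
    f x = f z := by
  have hbound : ‖f x - f z‖ ≤ 0 * ‖x - z‖ :=
    hs.norm_image_sub_le_of_norm_hasDerivWithin_le hf (fun _ _ => norm_zero.le) hz hx
  rw [zero_mul] at hbound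
  exact sub_eq_zero.mp (norm_le_zero_iff.mp hbound)

theorem newton_ode_first_integral_general {𝕜 : Type*} [RCLike 𝕜] {I : Set 𝕜} (hI : Convex ℝ I)
    {y y' y'' : 𝕜 → 𝕜} (hy : ∀ x ∈ I, HasDerivAt y (y' x) x)
    (hy' : ∀ x ∈ I, HasDerivAt y' (y'' x) x) (hne : ∀ x ∈ I, y' x ^ 2 + 1 ≠ 0)
    (hODE : ∀ x ∈ I, y'' x * (x * (3 * y' x ^ 2 - 1)) = y' x * (y' x ^ 2 + 1)) :
    (∀ x ∈ I, HasDerivAt (fun t => dragMomentum t (y' t)) 0 x) ∧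
      ∀ x ∈ I, ∀ z ∈ I, dragMomentum x (y' x) = dragMomentum z (y' z) := by
  have hderiv : ∀ x ∈ I, HasDerivAt (fun t => dragMomentum t (y' t)) 0 x := fun x hx =>
    (hasDerivAt_dragMomentum (hy' x hx) (hne x hx)).congr_deriv <| by
      rw [hODE x hx, sub_self, zero_div]
  exact ⟨hderiv, fun x hx z hz =>
    eq_of_hasDerivWithinAt_zero_of_convex hI (fun w hw => (hderiv w hw).hasDerivWithinAt) hx hz⟩

/-- If `y` is twice differentiable on an interval `I ⊆ (0,∞)` and satisfies
Newton's differential equation there (with `3(y')² ≠ 1`), then `x ↦ x·y'(x)/((y'(x))² + 1)²`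
has derivative zero on `I`; in particular it is constant on `I`. -/
theorem newton_ode_first_integral
    (I : Set ℝ) (hI : I ⊆ Set.Ioi (0 : ℝ)) (hIconv : Convex ℝ I)
    (y y' y'' : ℝ → ℝ)
    (hy : ∀ x ∈ I, HasDerivAt y (y' x) x)
    (hy' : ∀ x ∈ I, HasDerivAt y' (y'' x) x)
    (h3 : ∀ x ∈ I, 3 * (y' x) ^ 2 ≠ 1)
    (hODE : ∀ x ∈ I,
      y'' x = y' x * ((y' x) ^ 2 + 1) / (x * (3 * (y' x) ^ 2 - 1))) :
    (∀ x ∈ I, HasDerivAt (fun t => t * y' t / ((y' t) ^ 2 + 1) ^ 2) 0 x) ∧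
      ∀ x ∈ I, ∀ z ∈ I,
        x * y' x / ((y' x) ^ 2 + 1) ^ 2 = z * y' z / ((y' z) ^ 2 + 1) ^ 2 :=
  newton_ode_first_integral_general hIconv hy hy' (fun _ _ => by positivity) fun x hx =>
    (eq_div_iff (mul_ne_zero (hI hx).ne' (sub_ne_zero.mpr (h3 x hx)))).mp (hODE x hx)
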